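/- Let G be an exchange network and let α be an ε-fixed point of the natural dynamics, with earnings vector γ. Then γ satisfies the 6ε-balance property at every edge: for all (i,j)∈E, |[γ_i − max_{k∈∂i∖j}(w_{ik}−γ_k)_+] − [γ_j − max_{l∈∂j∖i}(w_{jl}−γ_l)_+]| ≤ 6ε. -/

import Mathlib

namespace EN

open Finset

variable {V : Type*}

/-- The nonnegative part `(x)₊ = max (x, 0)`. -/
noncomputable def pos (x : ℝ) : ℝ := max x 0

variable [Fintype V] [DecidableEq V]

/-- The maximum of `f` over a finite set of vertices (`0` over the empty set). -/
noncomputable def fmax (s : Finset V) (f : V → ℝ) : ℝ := ⨆ k ∈ s, f k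

/-- The offer from `i` to `j` given messages `α` and weights `w`:
`m_{i→j} = (w_{ij} − α_{i\j})₊ − (1/2) (w_{ij} − α_{i\j} − α_{j\i})₊`. -/
noncomputable def offer (w α : V → V → ℝ) (i j : V) : ℝ :=
  pos (w i j - α i j) - (1 / 2) * pos (w i j - α i j - α j i)

/-- The update operator `T` of the natural dynamics:
`(Tα)_{i\j} = max_{k ∈ ∂i \ j} m_{k→i}`. -/
noncomputable def upd (G : SimpleGraph V) [DecidableRel G.Adj] (w α : V → V → ℝ)
    (i j : V) : ℝ :=
  fmax ((G.neighborFinset i).erase j) fun k => offer w α k i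

/-- The earnings estimate `γ_i = max_{k ∈ ∂i} m_{k→i}`. -/
noncomputable def earn (G : SimpleGraph V) [DecidableRel G.Adj] (w α : V → V → ℝ)
    (i : V) : ℝ :=
  fmax (G.neighborFinset i) fun k => offer w α k i

/-- Exchange network weights: symmetric and positive on every edge. -/
def GoodW (G : SimpleGraph V) (w : V → V → ℝ) : Prop :=
  (∀ i j, w i j = w j i) ∧ ∀ i j, G.Adj i j → 0 < w i j

/-- A valid message vector: nonnegative on all directed edges. -/
def ValidMsg (G : SimpleGraph V) (α : V → V → ℝ) : Prop :=
  ∀ i j, G.Adj i j → 0 ≤ α i j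

/-- Fixed point of the natural-dynamics update operator. -/
def IsFixedPt (G : SimpleGraph V) [DecidableRel G.Adj] (w α : V → V → ℝ) : Prop :=
  ∀ i j, G.Adj i j → upd G w α i j = α i j

/-- `ε`-fixed point. -/
def IsEpsFixedPt (G : SimpleGraph V) [DecidableRel G.Adj] (w α : V → V → ℝ) (ε : ℝ) : Prop :=
  ∀ i j, G.Adj i j → |α i j - upd G w α i j| ≤ ε

/-- The natural dynamics with damping factor `κ`: `α^{t+1} = (1−κ) α^t + κ T α^t`. -/
noncomputable def dyn (G : SimpleGraph V) [DecidableRel G.Adj] (w : V → V → ℝ) (κ : ℝ)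
    (α0 : V → V → ℝ) : ℕ → V → V → ℝ
  | 0 => α0
  | t + 1 => fun i j =>
      (1 - κ) * dyn G w κ α0 t i j + κ * upd G w (dyn G w κ α0 t) i j

/-- Sup norm over directed edges. -/
noncomputable def msgSup (G : SimpleGraph V) [DecidableRel G.Adj] (f : V → V → ℝ) : ℝ :=
  ⨆ p : V × V, if G.Adj p.1 p.2 then |f p.1 p.2| else 0

/-- `M` is a matching of `G`: a symmetric subrelation of adjacency pairing each node
with at most one partner. -/
structure IsMatching (G : SimpleGraph V) (M : V → V → Prop) : Prop where
  subset : ∀ i j, M i j → G.Adj i j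
  symm : ∀ i j, M i j → M j i
  unique : ∀ i j k, M i j → M i k → j = k

/-- `(M, γ)` is a trade outcome. -/
def IsOutcome (G : SimpleGraph V) (w : V → V → ℝ) (M : V → V → Prop) (γ : V → ℝ) : Prop :=
  IsMatching G M ∧ (∀ i, 0 ≤ γ i) ∧ (∀ i j, M i j → γ i + γ j = w i j) ∧
    ∀ i, (∀ j, ¬M i j) → γ i = 0

/-- Stability of an outcome. -/
def Stable (G : SimpleGraph V) (w : V → V → ℝ) (M : V → V → Prop) (γ : V → ℝ) : Prop :=
  ∀ i j, G.Adj i j → ¬M i j → w i j ≤ γ i + γ j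

/-- The best alternative of `i` excluding `j`: `max_{k ∈ ∂i \ j} (w_{ik} − γ_k)₊`. -/
noncomputable def bestAlt (G : SimpleGraph V) [DecidableRel G.Adj] (w : V → V → ℝ)
    (γ : V → ℝ) (i j : V) : ℝ :=
  fmax ((G.neighborFinset i).erase j) fun k => pos (w i k - γ k)

/-- Balance of an outcome. -/
def Balanced (G : SimpleGraph V) [DecidableRel G.Adj] (w : V → V → ℝ) (M : V → V → Prop)
    (γ : V → ℝ) : Prop :=
  ∀ i j, M i j → γ i - bestAlt G w γ i j = γ j - bestAlt G w γ j i

/-- Nash bargaining solution: a stable and balanced trade outcome. -/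
def IsNBSolution (G : SimpleGraph V) [DecidableRel G.Adj] (w : V → V → ℝ)
    (M : V → V → Prop) (γ : V → ℝ) : Prop :=
  IsOutcome G w M γ ∧ Stable G w M γ ∧ Balanced G w M γ

/-- `ε`-balance. -/
def EpsBalanced (G : SimpleGraph V) [DecidableRel G.Adj] (w : V → V → ℝ)
    (M : V → V → Prop) (γ : V → ℝ) (ε : ℝ) : Prop :=
  ∀ i j, M i j → |(γ i - bestAlt G w γ i j) - (γ j - bestAlt G w γ j i)| ≤ ε

/-- `ε`-Nash bargaining solution. -/
def IsEpsNB (G : SimpleGraph V) [DecidableRel G.Adj] (w : V → V → ℝ)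
    (M : V → V → Prop) (γ : V → ℝ) (ε : ℝ) : Prop :=
  IsOutcome G w M γ ∧ Stable G w M γ ∧ EpsBalanced G w M γ ε

/-- Feasible point of the LP relaxation of maximum weight matching. -/
def LPFeasible (G : SimpleGraph V) [DecidableRel G.Adj] (x : V → V → ℝ) : Prop :=
  (∀ i j, x i j = x j i) ∧ (∀ i j, 0 ≤ x i j) ∧ (∀ i j, ¬G.Adj i j → x i j = 0) ∧
    ∀ i, ∑ j ∈ G.neighborFinset i, x i j ≤ 1

/-- LP objective `Σ_{(i,j)∈E} w_{ij} x_{ij}` (each undirected edge counted once). -/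
noncomputable def LPval (G : SimpleGraph V) [DecidableRel G.Adj] (w x : V → V → ℝ) : ℝ :=
  (1 / 2) * ∑ i, ∑ j ∈ G.neighborFinset i, w i j * x i j

/-- Optimal point of the LP relaxation of maximum weight matching. -/
def LPOptimal (G : SimpleGraph V) [DecidableRel G.Adj] (w x : V → V → ℝ) : Prop :=
  LPFeasible G x ∧ ∀ y, LPFeasible G y → LPval G w y ≤ LPval G w x

def Integral (x : V → V → ℝ) : Prop := ∀ i j, x i j = 0 ∨ x i j = 1

def HalfIntegral (x : V → V → ℝ) : Prop := ∀ i j, x i j = 0 ∨ x i j = 1 / 2 ∨ x i j = 1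

open Classical in
/-- The LP point associated to a matching. -/
noncomputable def mInd (M : V → V → Prop) (i j : V) : ℝ := if M i j then 1 else 0

/-- The state with offers `m` induces the matching `M`: every node receiving a positive
offer is matched and receives its unique best offer from its partner, and every node
with zero earnings is unmatched. -/
def Induces (G : SimpleGraph V) [DecidableRel G.Adj] (m : V → V → ℝ)
    (M : V → V → Prop) : Prop :=
  IsMatching G M ∧
    (∀ i, (∃ k, G.Adj i k ∧ 0 < m k i) →
      ∃ j, M i j ∧ ∀ k, G.Adj i k → k ≠ j → m k i < m j i) ∧
    ∀ i, (fmax (G.neighborFinset i) fun k => m k i) = 0 → ∀ j, ¬M i j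

/-- Feasibility for the dual LP. -/
def DualFeasible (G : SimpleGraph V) (w : V → V → ℝ) (y : V → ℝ) : Prop :=
  (∀ i, 0 ≤ y i) ∧ ∀ i j, G.Adj i j → w i j ≤ y i + y j

/-- Optimality for the dual LP. -/
def DualOptimal (G : SimpleGraph V) (w : V → V → ℝ) (y : V → ℝ) : Prop :=
  DualFeasible G w y ∧ ∀ z, DualFeasible G w z → ∑ i, y i ≤ ∑ i, z i

/-- The unmatched balance property at every edge. -/
def UnmatchedBalance (G : SimpleGraph V) [DecidableRel G.Adj] (w : V → V → ℝ)
    (y : V → ℝ) : Prop :=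
  ∀ i j, G.Adj i j → y i - bestAlt G w y i j = y j - bestAlt G w y j i

/-! ### Unequal division -/

/-- Valid split fractions: `r_{ij} ∈ (0,1)` with `r_{ij} + r_{ji} = 1` on every edge. -/
def GoodR (G : SimpleGraph V) (r : V → V → ℝ) : Prop :=
  ∀ i j, G.Adj i j → 0 < r i j ∧ r i j < 1 ∧ r i j + r j i = 1

/-- The UD offer from `i` to `j`. -/
noncomputable def offerUD (w r α : V → V → ℝ) (i j : V) : ℝ :=
  pos (w i j - α i j) - r i j * pos (w i j - α i j - α j i)

/-- The UD update operator. -/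
noncomputable def updUD (G : SimpleGraph V) [DecidableRel G.Adj] (w r α : V → V → ℝ)
    (i j : V) : ℝ :=
  fmax ((G.neighborFinset i).erase j) fun k => offerUD w r α k i

/-- The UD earnings estimate. -/
noncomputable def earnUD (G : SimpleGraph V) [DecidableRel G.Adj] (w r α : V → V → ℝ)
    (i : V) : ℝ :=
  fmax (G.neighborFinset i) fun k => offerUD w r α k i

/-- Fixed point of the UD update operator. -/
def IsFixedPtUD (G : SimpleGraph V) [DecidableRel G.Adj] (w r α : V → V → ℝ) : Prop :=
  ∀ i j, G.Adj i j → updUD G w r α i j = α i j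

/-- Correct division. -/
def CorrectDiv (G : SimpleGraph V) [DecidableRel G.Adj] (w r : V → V → ℝ)
    (M : V → V → Prop) (γ : V → ℝ) : Prop :=
  ∀ i j, M i j →
    (1 / r i j) * (γ i - bestAlt G w γ i j) = (1 / r j i) * (γ j - bestAlt G w γ j i)

/-- UD solution: a stable trade outcome satisfying correct division. -/
def IsUDSolution (G : SimpleGraph V) [DecidableRel G.Adj] (w r : V → V → ℝ)
    (M : V → V → Prop) (γ : V → ℝ) : Prop :=
  IsOutcome G w M γ ∧ Stable G w M γ ∧ CorrectDiv G w r M γ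

/-- Edge surplus. -/
noncomputable def surp (G : SimpleGraph V) [DecidableRel G.Adj] (w : V → V → ℝ)
    (γ : V → ℝ) (i j : V) : ℝ :=
  w i j - bestAlt G w γ i j - bestAlt G w γ j i

open Classical in
/-- The rebalanced allocation `γ^reb`. -/
noncomputable def reb (G : SimpleGraph V) [DecidableRel G.Adj] (w r : V → V → ℝ)
    (M : V → V → Prop) (γ : V → ℝ) (i : V) : ℝ :=
  if h : ∃ j, M i j then
    bestAlt G w γ i h.choose + r i h.choose * surp G w γ i h.choose
  else 0

/-- The Edge Rebalancing iteration `γ^{t+1} = κ γ^reb(γ^t) + (1−κ) γ^t`. -/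
noncomputable def rebIter (G : SimpleGraph V) [DecidableRel G.Adj] (w r : V → V → ℝ)
    (M : V → V → Prop) (κ : ℝ) (γ0 : V → ℝ) : ℕ → V → ℝ
  | 0 => γ0
  | t + 1 => fun i =>
      κ * reb G w r M (rebIter G w r M κ γ0 t) i + (1 - κ) * rebIter G w r M κ γ0 t i

/-!
Read the messages `α i j` and `α j i` as disagreement payoffs on the edge `ij`, and let `s i j` be
the share of `i` in the Nash bargaining split of `w i j`. Then `s i j` is exactly
`max (α i j) (offer from j to i)`, and the offer from `i` to `j` is exactly `(w i j - s i j)₊`.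

At an `ε`-fixed point the earnings `γ i = max (upd i j) (offer from j to i)` arise from `s i j` by
moving `α i j` to `upd i j`, a change of at most `ε`. As `max` is 1-Lipschitz, `γ i` is within `ε`
of `s i j`, and the gain `γ i - upd i j` is within `ε` of `s i j - α i j`, which is half the surplus
of the edge and hence symmetric in `i` and `j`. Finally the alternative `(w i k - γ k)₊` is within
`ε` of the offer from `k` to `i`, so the best alternative is within `ε` of `upd i j`. These are two
errors of `ε` at each endpoint, `4 * ε` in all. Comparing gains over `upd i j`, rather than passing
from `upd i j` to `α i j` and back, is what improves on `6 * ε`.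
-/

theorem pos_nonneg (x : ℝ) : 0 ≤ pos x :=
  le_max_right x 0

theorem abs_pos_sub_pos_le (x y : ℝ) : |pos x - pos y| ≤ |x - y| :=
  abs_max_sub_max_le_abs x y 0

section FiniteMax

variable {ι : Type*} {s : Finset ι} {f g : ι → ℝ} {c ε : ℝ}

theorem fmax_le (hc : 0 ≤ c) (h : ∀ k ∈ s, f k ≤ c) : fmax s f ≤ c :=
  Real.iSup_le (fun k => Real.iSup_le (h k) hc) hc

theorem fmax_nonneg (h : ∀ k ∈ s, 0 ≤ f k) : 0 ≤ fmax s f :=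
  Real.iSup_nonneg fun k => Real.iSup_nonneg (h k)

theorem bddAbove_range_iSup_mem (s : Finset ι) (f : ι → ℝ) :
    BddAbove (Set.range fun k => ⨆ _ : k ∈ s, f k) := by
  refine (((s.finite_toSet.image f).insert 0).subset ?_).bddAbove
  rintro _ ⟨k, rfl⟩
  by_cases hk : k ∈ s
  · exact Or.inr ⟨k, hk, (ciSup_pos (f := fun _ => f k) hk).symm⟩
  · exact Or.inl (by simp [hk])

theorem le_fmax {k : ι} (hk : k ∈ s) : f k ≤ fmax s f :=
  calc f k = ⨆ _ : k ∈ s, f k := (ciSup_pos (f := fun _ => f k) hk).symm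
    _ ≤ fmax s f := le_ciSup (bddAbove_range_iSup_mem s f) k

theorem fmax_insert [DecidableEq ι] {a : ι} (ha : 0 ≤ f a) :
    fmax (insert a s) f = max (fmax s f) (f a) := by
  have hfa : f a ≤ fmax (insert a s) f := le_fmax (mem_insert_self a s)
  refine le_antisymm (fmax_le (le_max_of_le_right ha) fun k hk => ?_)
    (max_le (fmax_le (ha.trans hfa) fun k hk => le_fmax (mem_insert_of_mem hk)) hfa)
  rcases mem_insert.1 hk with rfl | hks
  · exact le_max_right _ _
  · exact le_max_of_le_left (le_fmax hks)

theorem fmax_le_fmax_add (hε : 0 ≤ ε) (hg : ∀ k ∈ s, 0 ≤ g k) (h : ∀ k ∈ s, f k ≤ g k + ε) :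
    fmax s f ≤ fmax s g + ε :=
  fmax_le (add_nonneg (fmax_nonneg hg) hε) fun k hk => (h k hk).trans <| by
    gcongr
    exact le_fmax hk

theorem abs_fmax_sub_fmax_le (hε : 0 ≤ ε) (hf : ∀ k ∈ s, 0 ≤ f k) (hg : ∀ k ∈ s, 0 ≤ g k)
    (h : ∀ k ∈ s, |f k - g k| ≤ ε) : |fmax s f - fmax s g| ≤ ε :=
  abs_sub_le_iff.2
    ⟨sub_le_iff_le_add'.2 <| fmax_le_fmax_add hε hg fun k hk =>
      sub_le_iff_le_add'.1 (abs_sub_le_iff.1 (h k hk)).1,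
    sub_le_iff_le_add'.2 <| fmax_le_fmax_add hε hf fun k hk =>
      sub_le_iff_le_add'.1 (abs_sub_le_iff.1 (h k hk)).2⟩

end FiniteMax

section NashShare

variable {V : Type*} {w α : V → V → ℝ} {i j : V}

/-- The share of `i` in the Nash bargaining split of `w i j` between `i` and `j` with disagreement
payoffs `α i j` and `α j i`: its disagreement payoff plus half of the surplus, where a negative
surplus counts as `0`. It is the common reference for the offers on the edge `ij` and the earnings
of `i`. -/
noncomputable def nashShare (w α : V → V → ℝ) (i j : V) : ℝ :=
  α i j + 1 / 2 * pos (w i j - α i j - α j i)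

theorem nashShare_sub_comm (hw : w i j = w j i) :
    nashShare w α i j - α i j = nashShare w α j i - α j i := by
  simp only [nashShare, add_sub_cancel_left, hw, sub_right_comm]

theorem offer_eq_pos_sub_nashShare (h : 0 ≤ α j i) :
    offer w α i j = pos (w i j - nashShare w α i j) := by
  simp only [offer, nashShare, pos]
  grind

theorem max_offer_eq_nashShare (hw : w i j = w j i) (h : 0 ≤ α i j) :
    max (α i j) (offer w α j i) = nashShare w α i j := by
  simp only [offer, nashShare, pos, hw]
  grind

theorem offer_nonneg (h : 0 ≤ α j i) : 0 ≤ offer w α i j :=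
  offer_eq_pos_sub_nashShare h ▸ pos_nonneg _

end NashShare

section EpsFixedPoint

variable {G : SimpleGraph V} [DecidableRel G.Adj] {w α : V → V → ℝ} {ε : ℝ} {i j : V}

theorem earn_eq_max_upd_offer (hij : G.Adj i j) (h : 0 ≤ α i j) :
    earn G w α i = max (upd G w α i j) (offer w α j i) := by
  rw [earn, ← insert_erase ((G.mem_neighborFinset i j).2 hij)]
  exact fmax_insert (offer_nonneg h)

theorem IsEpsFixedPt.nonneg (hα : IsEpsFixedPt G w α ε) (hij : G.Adj i j) : 0 ≤ ε :=
  (abs_nonneg _).trans (hα i j hij)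

theorem IsEpsFixedPt.abs_earn_sub_nashShare_le (hα : IsEpsFixedPt G w α ε) (hij : G.Adj i j)
    (hw : w i j = w j i) (h : 0 ≤ α i j) : |earn G w α i - nashShare w α i j| ≤ ε := by
  rw [earn_eq_max_upd_offer hij h, ← max_offer_eq_nashShare hw h, abs_sub_comm]
  exact (abs_max_sub_max_le_abs _ _ _).trans (hα i j hij)

theorem IsEpsFixedPt.abs_gain_sub_gain_le (hα : IsEpsFixedPt G w α ε) (hij : G.Adj i j)
    (hw : w i j = w j i) (h : 0 ≤ α i j) :
    |(earn G w α i - upd G w α i j) - (nashShare w α i j - α i j)| ≤ ε := by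
  have max_sub_left (a b : ℝ) : max a b - a = pos (b - a) := by
    rw [max_comm, pos, ← max_sub_sub_right, sub_self]
  rw [earn_eq_max_upd_offer hij h, ← max_offer_eq_nashShare hw h, max_sub_left, max_sub_left]
  refine (abs_pos_sub_pos_le _ _).trans ?_
  rw [sub_sub_sub_cancel_left]
  exact hα i j hij

theorem IsEpsFixedPt.abs_alternative_sub_offer_le (hα : IsEpsFixedPt G w α ε)
    (hval : ValidMsg G α) (hij : G.Adj i j) (hw : w i j = w j i) :
    |pos (w i j - earn G w α j) - offer w α j i| ≤ ε := by
  rw [offer_eq_pos_sub_nashShare (hval i j hij), ← hw]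
  refine (abs_pos_sub_pos_le _ _).trans ?_
  rw [sub_sub_sub_cancel_left, abs_sub_comm]
  exact hα.abs_earn_sub_nashShare_le hij.symm hw.symm (hval j i hij.symm)

theorem IsEpsFixedPt.abs_bestAlt_sub_upd_le (hα : IsEpsFixedPt G w α ε) (hval : ValidMsg G α)
    (hw : ∀ i j, w i j = w j i) (hij : G.Adj i j) :
    |bestAlt G w (earn G w α) i j - upd G w α i j| ≤ ε := by
  have adj_of_mem {k : V} (hk : k ∈ (G.neighborFinset i).erase j) : G.Adj i k :=
    (G.mem_neighborFinset i k).1 (mem_of_mem_erase hk)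
  exact abs_fmax_sub_fmax_le (hα.nonneg hij) (fun _ _ => pos_nonneg _)
    (fun k hk => offer_nonneg (hval i k (adj_of_mem hk)))
    fun k hk => hα.abs_alternative_sub_offer_le hval (adj_of_mem hk) (hw i k)

end EpsFixedPoint

theorem eps_fixedPoint_sixEps_balance_general (G : SimpleGraph V) [DecidableRel G.Adj]
    (w : V → V → ℝ) (hw : ∀ i j, w i j = w j i) (ε : ℝ) (α : V → V → ℝ)
    (hval : ValidMsg G α) (hefp : IsEpsFixedPt G w α ε) :
    EpsBalanced G w G.Adj (earn G w α) (4 * ε) := by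
  intro i j hij
  have gain_i := abs_le.1 (hefp.abs_gain_sub_gain_le hij (hw i j) (hval i j hij))
  have gain_j := abs_le.1 (hefp.abs_gain_sub_gain_le hij.symm (hw j i) (hval j i hij.symm))
  have alt_i := abs_le.1 (hefp.abs_bestAlt_sub_upd_le hval hw hij)
  have alt_j := abs_le.1 (hefp.abs_bestAlt_sub_upd_le hval hw hij.symm)
  have equal_gains := nashShare_sub_comm (α := α) (hw i j)
  exact abs_le.2 ⟨by linarith, by linarith⟩

/-- The earnings vector of an `ε`-fixed point satisfies the
`6ε`-balance property at every edge. -/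
theorem eps_fixedPoint_sixEps_balance
    {V : Type*} [Fintype V] [DecidableEq V] (G : SimpleGraph V) [DecidableRel G.Adj]
    (w : V → V → ℝ) (hw : GoodW G w)
    (ε : ℝ) (hε : 0 < ε)
    (α : V → V → ℝ) (hval : ValidMsg G α) (hefp : IsEpsFixedPt G w α ε) :
    ∀ i j, G.Adj i j →
      |(earn G w α i - bestAlt G w (earn G w α) i j) -
        (earn G w α j - bestAlt G w (earn G w α) j i)| ≤ 6 * ε := by
  intro i j hij
  exact (eps_fixedPoint_sixEps_balance_general G w hw.1 ε α hval hefp i j hij).trans (by linarith)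

end EN
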